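/- Let S = ⟨S, δ, L⟩ and S' = ⟨S', δ', L'⟩ be FLTSs that are witnessed and modally saturated w.r.t. f∃ΔK^0, and let x ∈ S, x' ∈ S'. Then there exists a crisp simulation Z between S and S' with Z(x,x') if and only if φ^S(x) ≤ φ^S'(x') for all formulas φ of f∃ΔK^0. -/

import Mathlib

open unitInterval

noncomputable section
attribute [local instance] Classical.propDecidable

instance : Fact ((0:ℝ) ≤ 1) := ⟨zero_le_one⟩

/-- A left-continuous t-norm on the unit interval `[0,1]`: a commutative, associative
binary operation with neutral element `1`, increasing in both arguments, that
distributes over suprema of nonempty sets (left-continuity). -/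
structure Tnorm where
  mul : I → I → I
  mul_comm : ∀ x y, mul x y = mul y x
  mul_assoc : ∀ x y z, mul (mul x y) z = mul x (mul y z)
  mul_one : ∀ x, mul x 1 = x
  mul_le_mul : ∀ {a b c d : I}, a ≤ b → c ≤ d → mul a c ≤ mul b d
  left_continuous : ∀ (x : I) (s : Set I), s.Nonempty → mul x (sSup s) = sSup (mul x '' s)

/-- The residuum of a t-norm: `(x ⇒ y) = sup {z | z ⊗ x ≤ y}`. -/
def Tnorm.res (T : Tnorm) (x y : I) : I := sSup {z : I | T.mul z x ≤ y}

/-- A fuzzy labeled transition system over actions `A`, propositions `P`, states `St`. -/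
structure FLTS (A P St : Type) where
  delta : St → A → St → I
  label : St → P → I

/-- A crisp simulation between two FLTSs. -/
def IsSimulation {A P S S' : Type} (M : FLTS A P S) (M' : FLTS A P S')
    (Z : S → S' → Prop) : Prop :=
  (∀ x x', Z x x' → ∀ p, M.label x p ≤ M'.label x' p) ∧
  (∀ x y x' (ρ : A), Z x x' → 0 < M.delta x ρ y →
    ∃ y', M.delta x ρ y ≤ M'.delta x' ρ y' ∧ Z y y')

/-- Formulas of f∃ΔK^0. -/
inductive KForm (A P : Type) : Type
  | prop : P → KForm A P
  | baaz : KForm A P → KForm A P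
  | and : KForm A P → KForm A P → KForm A P
  | impl : I → KForm A P → KForm A P
  | dia : A → KForm A P → KForm A P

/-- Semantics of f∃ΔK^0 formulas. -/
def kSem (T : Tnorm) {A P St : Type} (M : FLTS A P St) : KForm A P → St → I
  | .prop p, x => M.label x p
  | .baaz φ, x => if kSem T M φ x = 1 then 1 else 0
  | .and φ ψ, x => min (kSem T M φ x) (kSem T M ψ x)
  | .impl a φ, x => T.res a (kSem T M φ x)
  | .dia ρ φ, x => ⨆ y, T.mul (M.delta x ρ y) (kSem T M φ y)

/-- An FLTS is witnessed w.r.t. f∃ΔK^0: the supremum in the semantic clause for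
`⟨ϱ⟩φ` is always attained by a greatest element. -/
def WitnessedK (T : Tnorm) {A P St : Type} (M : FLTS A P St) : Prop :=
  ∀ (φ : KForm A P) (ρ : A) (x : St), ∃ y : St, ∀ z : St,
    T.mul (M.delta x ρ z) (kSem T M φ z) ≤ T.mul (M.delta x ρ y) (kSem T M φ y)

/-- An FLTS is modally saturated w.r.t. f∃ΔK^0. Here `Ψ.inf (fun φ => kSem T M φ y)`
is the value of the conjunction `⋀Ψ` at `y` (the empty conjunction has value `1 = ⊤`). -/
def ModallySaturated (T : Tnorm) {A P St : Type} (M : FLTS A P St) : Prop :=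
  ∀ (x : St) (a : I) (ρ : A) (Γ : Set (KForm A P)), 0 < a → Γ.Infinite →
    (∀ Ψ : Finset (KForm A P), ↑Ψ ⊆ Γ →
      ∃ y : St, a ≤ T.mul (M.delta x ρ y) (Ψ.inf fun φ => kSem T M φ y)) →
    ∃ y : St, a ≤ M.delta x ρ y ∧ ∀ φ ∈ Γ, 0 < kSem T M φ y

/-!
Simulations preserve formula values by induction on formulas. Conversely, the relation "every
formula is at least as true at `x'` as at `x`" is itself a simulation. Given a transition from `x`
to `y`, every formula `χ` true to degree `1` at `y` satisfies `δ(x,ϱ,y) ≤ (⟨ϱ⟩χ)^S(x)`, so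
witnessedness provides a `ϱ`-successor of `x'` for each such `χ`. These `χ` are closed under finite
conjunctions, hence modal saturation provides a single successor `y'` at which all of them are
positive. Since `Δ(a → φ)` with `a = φ^S(y)` is one of them, and is crisp, `y'` dominates `y`.
-/

namespace Tnorm

variable (T : Tnorm) {x y z : I}

theorem zero_mul (x : I) : T.mul 0 x = 0 :=
  le_antisymm ((T.mul_le_mul le_rfl le_one').trans_eq (T.mul_one 0)) nonneg'

theorem one_mul (x : I) : T.mul 1 x = x := by
  rw [T.mul_comm, T.mul_one]

theorem le_res_iff : z ≤ T.res x y ↔ T.mul z x ≤ y := by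
  refine ⟨fun hz => ?_, fun hz => le_sSup hz⟩
  have hne : {w : I | T.mul w x ≤ y}.Nonempty := ⟨0, (T.zero_mul x).trans_le nonneg'⟩
  calc T.mul z x ≤ T.mul x (T.res x y) := T.mul_comm z x ▸ T.mul_le_mul le_rfl hz
    _ = sSup (T.mul x '' {w | T.mul w x ≤ y}) := T.left_continuous x _ hne
    _ ≤ y := sSup_le <| by
      rintro _ ⟨w, hw, rfl⟩
      exact (T.mul_comm x w).trans_le hw

theorem res_eq_one_iff : T.res x y = 1 ↔ x ≤ y := by
  rw [le_antisymm_iff, and_iff_right le_one', T.le_res_iff, T.one_mul]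

theorem res_le_res_left (x : I) (h : y ≤ z) : T.res x y ≤ T.res x z :=
  T.le_res_iff.2 ((T.le_res_iff.1 le_rfl).trans h)

end Tnorm

section Semantics

variable {A P S S' : Type} {T : Tnorm} {M : FLTS A P S} {M' : FLTS A P S'}

theorem kSem_zero_impl (φ : KForm A P) (x : S) : kSem T M (.impl 0 φ) x = 1 :=
  T.res_eq_one_iff.2 nonneg'

theorem kSem_baaz_pos_iff {φ : KForm A P} {x : S} :
    0 < kSem T M (.baaz φ) x ↔ kSem T M φ x = 1 := by
  by_cases h : kSem T M φ x = 1 <;> simp [kSem, h]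

theorem kSem_baaz_eq_one_iff {φ : KForm A P} {x : S} :
    kSem T M (.baaz φ) x = 1 ↔ kSem T M φ x = 1 := by
  by_cases h : kSem T M φ x = 1 <;> simp [kSem, h]

theorem kSem_baaz_le_kSem_baaz {φ : KForm A P} {x : S} {x' : S'}
    (h : kSem T M φ x ≤ kSem T M' φ x') :
    kSem T M (.baaz φ) x ≤ kSem T M' (.baaz φ) x' := by
  by_cases hx : kSem T M φ x = 1
  · have hx' : kSem T M' φ x' = 1 := le_antisymm le_one' (hx ▸ h)
    exact le_one'.trans_eq (kSem_baaz_eq_one_iff.2 hx').symm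
  · exact (if_neg hx).trans_le nonneg'

theorem mul_kSem_le_kSem_dia (φ : KForm A P) (ρ : A) (x y : S) :
    T.mul (M.delta x ρ y) (kSem T M φ y) ≤ kSem T M (.dia ρ φ) x :=
  le_iSup (fun y => T.mul (M.delta x ρ y) (kSem T M φ y)) y

theorem delta_le_kSem_dia {φ : KForm A P} {y : S} (hφ : kSem T M φ y = 1) (ρ : A) (x : S) :
    M.delta x ρ y ≤ kSem T M (.dia ρ φ) x := by
  simpa only [hφ, T.mul_one] using mul_kSem_le_kSem_dia (T := T) (M := M) φ ρ x y

theorem WitnessedK.exists_le_mul (hM : WitnessedK T M) {a : I} {φ : KForm A P} {ρ : A} {x : S}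
    (ha : a ≤ kSem T M (.dia ρ φ) x) :
    ∃ y, a ≤ T.mul (M.delta x ρ y) (kSem T M φ y) :=
  let ⟨y, hy⟩ := hM φ ρ x
  ⟨y, ha.trans (iSup_le hy)⟩

theorem IsSimulation.kSem_le_kSem {Z : S → S' → Prop} (hZ : IsSimulation M M' Z)
    (φ : KForm A P) {x : S} {x' : S'} (hx : Z x x') : kSem T M φ x ≤ kSem T M' φ x' := by
  induction φ generalizing x x' with
  | prop p => exact hZ.1 x x' hx p
  | baaz φ ih => exact kSem_baaz_le_kSem_baaz (ih hx)
  | and φ ψ ihφ ihψ => exact min_le_min (ihφ hx) (ihψ hx)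
  | impl a φ ih => exact T.res_le_res_left a (ih hx)
  | dia ρ φ ih =>
    refine iSup_le fun y => ?_
    rcases eq_zero_or_pos (M.delta x ρ y) with hδ | hδ
    · rw [hδ, T.zero_mul]
      exact nonneg'
    · obtain ⟨y', hδ', hy⟩ := hZ.2 x y x' ρ hx hδ
      exact (T.mul_le_mul hδ' (ih hy)).trans (mul_kSem_le_kSem_dia φ ρ x' y')

end Semantics

section LogicalPreorder

variable {A P S S' : Type}

/-- The formula `Δ(a → φ)`, which is true to degree `1` where `φ` has value at least `a` and to
degree `0` elsewhere. -/
def KForm.atLeast (a : I) (φ : KForm A P) : KForm A P :=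
  .baaz (.impl a φ)

/-- The formulas true to degree `1` at a state. -/
def kTheory (T : Tnorm) (M : FLTS A P S) (x : S) : Set (KForm A P) :=
  {φ | kSem T M φ x = 1}

/-- The logical preorder between states: each formula is at least as true at `x'` as at `x`. -/
def KFormLE (T : Tnorm) (M : FLTS A P S) (M' : FLTS A P S') (x : S) (x' : S') : Prop :=
  ∀ φ : KForm A P, kSem T M φ x ≤ kSem T M' φ x'

variable {T : Tnorm} {M : FLTS A P S} {M' : FLTS A P S'}

theorem kSem_atLeast_pos_iff {a : I} {φ : KForm A P} {x : S} :
    0 < kSem T M (.atLeast a φ) x ↔ a ≤ kSem T M φ x :=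
  kSem_baaz_pos_iff.trans T.res_eq_one_iff

theorem atLeast_mem_kTheory_iff {a : I} {φ : KForm A P} {x : S} :
    .atLeast a φ ∈ kTheory T M x ↔ a ≤ kSem T M φ x :=
  kSem_baaz_eq_one_iff.trans T.res_eq_one_iff

theorem kFormLE_of_forall_mem_kTheory_pos {x : S} {x' : S'}
    (h : ∀ φ ∈ kTheory T M x, 0 < kSem T M' φ x') : KFormLE T M M' x x' :=
  fun _ => kSem_atLeast_pos_iff.1 (h _ (atLeast_mem_kTheory_iff.2 le_rfl))

theorem exists_kSem_eq_inf [Nonempty P] (T : Tnorm) (Ψ : Finset (KForm A P)) :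
    ∃ χ : KForm A P, ∀ {St : Type} (N : FLTS A P St) (x : St),
      kSem T N χ x = Ψ.inf fun φ => kSem T N φ x := by
  induction Ψ using Finset.induction_on with
  | empty =>
    obtain ⟨p⟩ := ‹Nonempty P›
    exact ⟨.impl 0 (.prop p), fun N x => kSem_zero_impl (.prop p) x⟩
  | insert φ Ψ _ ih =>
    obtain ⟨χ, hχ⟩ := ih
    refine ⟨.and φ χ, fun N x => ?_⟩
    rw [Finset.inf_insert, ← hχ N x]
    rfl

theorem kTheory_infinite [Nonempty P] (T : Tnorm) (M : FLTS A P S) (x : S) :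
    (kTheory T M x).Infinite := by
  obtain ⟨p⟩ := ‹Nonempty P›
  have : Infinite I := Set.Icc.infinite zero_lt_one
  have h_inj : Function.Injective fun a : I => (.impl a (.impl 0 (.prop p)) : KForm A P) :=
    fun _ _ h => (KForm.impl.inj h).1
  refine (Set.infinite_range_of_injective h_inj).mono ?_
  rintro _ ⟨a, rfl⟩
  exact T.res_eq_one_iff.2 (le_one'.trans_eq (kSem_zero_impl (.prop p) x).symm)

theorem KFormLE.exists_delta_le_mul_inf [Nonempty P] {x y : S} {x' : S'} {ρ : A}
    (hx : KFormLE T M M' x x') (hM' : WitnessedK T M') {Ψ : Finset (KForm A P)}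
    (hΨ : ↑Ψ ⊆ kTheory T M y) :
    ∃ y', M.delta x ρ y ≤ T.mul (M'.delta x' ρ y') (Ψ.inf fun φ => kSem T M' φ y') := by
  obtain ⟨χ, hχ⟩ := exists_kSem_eq_inf T Ψ
  have hχy : kSem T M χ y = 1 :=
    le_antisymm le_one' ((Finset.le_inf fun φ hφ => (hΨ hφ).ge).trans_eq (hχ M y).symm)
  simpa only [hχ M'] using
    hM'.exists_le_mul ((delta_le_kSem_dia hχy ρ x).trans (hx (.dia ρ χ)))

theorem isSimulation_kFormLE [Nonempty P] (hwM' : WitnessedK T M')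
    (hsM' : ModallySaturated T M') : IsSimulation M M' (KFormLE T M M') := by
  refine ⟨fun x x' hx p => hx (.prop p), fun x y x' ρ hx hδ => ?_⟩
  obtain ⟨y', hδ', hy'⟩ := hsM' x' (M.delta x ρ y) ρ (kTheory T M y) hδ (kTheory_infinite T M y)
    fun Ψ hΨ => hx.exists_delta_le_mul_inf hwM' hΨ
  exact ⟨y', hδ', kFormLE_of_forall_mem_kTheory_pos hy'⟩

end LogicalPreorder

theorem simulation_iff_feK0_general {A P S S' : Type} [Nonempty P]
    (T : Tnorm) (M : FLTS A P S) (M' : FLTS A P S')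
    (hwM' : WitnessedK T M') (hsM' : ModallySaturated T M') (x : S) (x' : S') :
    (∃ Z : S → S' → Prop, IsSimulation M M' Z ∧ Z x x') ↔
      (∀ φ : KForm A P, kSem T M φ x ≤ kSem T M' φ x') :=
  ⟨fun ⟨_, hZ, hx⟩ φ => hZ.kSem_le_kSem φ hx,
    fun hx => ⟨KFormLE T M M', isSimulation_kFormLE hwM' hsM', hx⟩⟩

/-- For FLTSs witnessed and modally saturated w.r.t. f∃ΔK^0, a state `x'` simulates
`x` iff `x'` satisfies all f∃ΔK^0 formulas at least as much as `x` does. -/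
theorem simulation_iff_feK0
    {A P S S' : Type} [Nonempty A] [Nonempty P] [Nonempty S] [Nonempty S']
    (T : Tnorm) (M : FLTS A P S) (M' : FLTS A P S')
    (hwM : WitnessedK T M) (hwM' : WitnessedK T M')
    (hsM : ModallySaturated T M) (hsM' : ModallySaturated T M')
    (x : S) (x' : S') :
    (∃ Z : S → S' → Prop, IsSimulation M M' Z ∧ Z x x') ↔
      (∀ φ : KForm A P, kSem T M φ x ≤ kSem T M' φ x') :=
  simulation_iff_feK0_general T M M' hwM' hsM' x x'
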